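/- Under the same componentwise LDP setup with n i.i.d. raw samples: if (X_1,...,X_n) are i.i.d. with law P and (X̃_1,...,X̃_n) i.i.d. with law P̃, all strict-subset marginals of P and P̃ coincide, and Z_i, Z̃_i are obtained through an (possibly sequentially interactive) α-CLDP mechanism, then d_{KL}(Law(Z_1,...,Z_n), Law(Z̃_1,...,Z̃_n)) ≤ n · (∏_{j=1}^d (e^{α_j} − 1))² · d_{TV}(P, P̃)². -/

import Mathlib

open MeasureTheory Real

/-- Total variation `∫ |dP − dPt|` (twice the usual TV distance). -/
noncomputable def dTV {W : Type*} [MeasurableSpace W] (P Pt : Measure W)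
    [IsFiniteMeasure P] [IsFiniteMeasure Pt] : ℝ :=
  (((P.toSignedMeasure - Pt.toSignedMeasure).totalVariation) Set.univ).toReal

/-- Kullback–Leibler divergence `d_KL(M, Mt) = ∫ log (dMt/dM) dMt`. -/
noncomputable def dKL {W : Type*} [MeasurableSpace W] (M Mt : Measure W) : ℝ :=
  ∫ z, Real.log ((Mt.rnDeriv M z).toReal) ∂Mt

/-- Law of the public sample `(Z_1, …, Z_n)` produced by a sequentially
interactive componentwise mechanism applied to i.i.d. raw samples of law `P`:
given the public history `hist = (Z_1, …, Z_i)`, a fresh raw sample `x ~ P` is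
drawn and each component `x j` is privatized independently through the channel
`K i j (x j) hist`. -/
noncomputable def jointLaw {d : ℕ} {X Z : Fin d → Type*}
    [∀ j, MeasurableSpace (X j)] [∀ j, MeasurableSpace (Z j)]
    (P : Measure (∀ j, X j))
    (K : (i : ℕ) → (j : Fin d) → X j → (Fin i → ∀ j, Z j) → Measure (Z j)) :
    (n : ℕ) → Measure (Fin n → ∀ j, Z j)
  | 0 => Measure.dirac (fun i => i.elim0)
  | (n + 1) => (jointLaw P K n).bind fun hist =>
      ((P.bind fun x => Measure.pi fun j => K n j (x j) hist).map
        fun znew => Fin.snoc hist znew)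

/-!
Write `k_j x = r_j x + m_j`, where `m_j = ⨅ x, k_j x` is the largest measure below all outputs of
the `j`-th channel; local privacy says that `r_j x ≤ (e^{α_j} - 1) m_j`. Expanding the product
channel `⨂_j (r_j + m_j)` over subsets of components, every term of a strict subset sees only a
strict marginal of the raw law and is the same for `P` and `Pt`, while the full term changes by at
most `dTV P Pt · ∏_j (e^{α_j} - 1) · ⨂_j m_j`. Hence, given the public history, the density of the
next public value under `Pt` with respect to `P` lies within `ε = dTV P Pt · ∏_j (e^{α_j} - 1)` of
`1`, so its conditional divergence is at most `ε²` because `t log t + 1 - t ≤ (t - 1)²`. The chain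
rule adds these bounds over the `n` rounds.
-/

open ProbabilityTheory InformationTheory
open scoped ENNReal NNReal

section PiMeasure

variable {ι : Type*} [Fintype ι] {Z : ι → Type*} [∀ j, MeasurableSpace (Z j)]

lemma pi_add_eq_sum_piecewise [DecidableEq ι] (μ ν : ∀ j, Measure (Z j))
    [∀ j, SigmaFinite (μ j)] [∀ j, SigmaFinite (ν j)] :
    Measure.pi (fun j => μ j + ν j) = ∑ S : Finset ι, Measure.pi (S.piecewise μ ν) := by
  have sigmaFinite_piecewise (S : Finset ι) (j : ι) : SigmaFinite (S.piecewise μ ν j) := by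
    by_cases hj : j ∈ S <;> simp only [hj, Finset.piecewise, if_true, if_false] <;> infer_instance
  refine Measure.pi_eq fun s _ => ?_
  have piecewise_apply (S : Finset ι) (j : ι) :
      S.piecewise μ ν j (s j) = S.piecewise (fun j => μ j (s j)) (fun j => ν j (s j)) j := by
    by_cases hj : j ∈ S <;> simp [hj]
  simp only [Measure.finsetSum_apply, Measure.pi_pi, Measure.add_apply, piecewise_apply,
    Finset.prod_piecewise, Finset.univ_inter, ← Finset.compl_eq_univ_sdiff, Fintype.prod_add]

lemma pi_smul_eq_prod_smul (c : ι → ℝ≥0) (μ : ∀ j, Measure (Z j)) [∀ j, SigmaFinite (μ j)] :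
    Measure.pi (fun j => c j • μ j) = (∏ j, c j) • Measure.pi μ := by
  refine Measure.pi_eq fun s _ => ?_
  simp only [Measure.smul_apply, Measure.pi_pi, ENNReal.smul_def, smul_eq_mul,
    Finset.prod_mul_distrib, ENNReal.ofNNReal_finsetProd]

lemma pi_measure_mono {μ ν : ∀ j, Measure (Z j)} [∀ j, IsFiniteMeasure (μ j)]
    [∀ j, IsFiniteMeasure (ν j)] (h : ∀ j, μ j ≤ ν j) : Measure.pi μ ≤ Measure.pi ν := by
  classical
  calc Measure.pi μ = Measure.pi (Finset.univ.piecewise μ fun j => ν j - μ j) := by simp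
    _ ≤ ∑ S : Finset ι, Measure.pi (S.piecewise μ fun j => ν j - μ j) :=
        Finset.single_le_sum
          (f := fun S : Finset ι => Measure.pi (S.piecewise μ fun j => ν j - μ j))
          (fun _ _ => Measure.zero_le _) (Finset.mem_univ Finset.univ)
    _ = Measure.pi ν := by
        simp only [← pi_add_eq_sum_piecewise, add_comm (μ _),
          Measure.sub_add_cancel_of_le (h _)]

lemma measurable_pi_measure {T : Type*} [MeasurableSpace T] {k : ∀ j, T → Measure (Z j)}
    [∀ j t, IsFiniteMeasure (k j t)] (hk : ∀ j, Measurable (k j)) :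
    Measurable fun t => Measure.pi fun j => k j t := by
  have measurable_rectangle (s : ∀ j, Set (Z j)) (hs : ∀ j, MeasurableSet (s j)) :
      Measurable fun t => Measure.pi (fun j => k j t) (Set.univ.pi s) := by
    simp only [Measure.pi_pi]
    exact Finset.measurable_fun_prod _ fun j _ => Measure.measurable_measure.1 (hk j) _ (hs j)
  refine Measurable.measure_of_isPiSystem generateFrom_pi.symm isPiSystem_pi ?_ ?_
  · rintro _ ⟨s, hs, rfl⟩
    exact measurable_rectangle s fun j => hs j trivial
  · simpa only [Set.pi_univ] using measurable_rectangle (fun _ => Set.univ) fun _ => .univ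

end PiMeasure

instance {W : Type*} [MeasurableSpace W] : PosSMulMono ℝ≥0 (Measure W) where
  smul_le_smul_of_nonneg_left a _ μ ν h A := by
    simp only [Measure.smul_apply]
    gcongr

lemma exists_le_of_forall_le_smul {X Z : Type*} [MeasurableSpace Z] {k : X → Measure Z}
    {a : ℝ≥0} (ha : 0 < a) (h : ∀ x x', k x ≤ a • k x') :
    ∃ m : Measure Z, (∀ x, m ≤ k x) ∧ ∀ x, k x ≤ a • m := by
  refine ⟨⨅ x, k x, iInf_le k, fun x => ?_⟩
  rw [← inv_smul_le_iff_of_pos ha]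
  exact le_iInf fun x' => (inv_smul_le_iff_of_pos ha).2 (h x x')

lemma measurable_measure_sub_const {X Z : Type*} [MeasurableSpace X] [MeasurableSpace Z]
    {k : X → Measure Z} (hk : Measurable k) {m : Measure Z} [IsFiniteMeasure m]
    (hm : ∀ x, m ≤ k x) : Measurable fun x => k x - m := by
  refine Measure.measurable_of_measurable_coe _ fun A hA => ?_
  simp only [Measure.sub_apply hA (hm _)]
  exact (Measure.measurable_measure.1 hk A hA).sub_const _

lemma klFun_le_sq {x : ℝ} (hx : 0 ≤ x) : klFun x ≤ (x - 1) ^ 2 := by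
  rcases hx.eq_or_lt with rfl | hx
  · simp [klFun]
  · calc klFun x = x * Real.log x + 1 - x := klFun_apply x
      _ ≤ x * (x - 1) + 1 - x := by gcongr; exact Real.log_le_sub_one_of_pos hx
      _ = (x - 1) ^ 2 := by ring

section Comparison

variable {H W : Type*} [MeasurableSpace H] [MeasurableSpace W]

section

variable {μ ν : Measure W} [IsFiniteMeasure μ] [IsFiniteMeasure ν]

lemma abs_rnDeriv_sub_one_le {ε : ℝ≥0} (hμν : μ ≤ ν + ε • ν) (hνμ : ν ≤ μ + ε • ν) :
    ∀ᵐ x ∂ν, |(μ.rnDeriv ν x).toReal - 1| ≤ ε := by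
  have hac : μ ≪ ν := fun A hA => by simpa [hA] using hμν A
  have upper : μ.rnDeriv ν ≤ᵐ[ν] fun _ => 1 + (ε : ℝ≥0∞) := by
    refine ae_le_of_forall_setLIntegral_le_of_sigmaFinite (by fun_prop) fun A _ _ => ?_
    rw [Measure.setLIntegral_rnDeriv hac]
    calc μ A ≤ ν A + ε * ν A := hμν A
      _ = ∫⁻ _ in A, (1 + ε : ℝ≥0∞) ∂ν := by rw [setLIntegral_const, add_mul, one_mul]
  have lower : (fun _ => 1) ≤ᵐ[ν] fun x => μ.rnDeriv ν x + ε := by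
    refine ae_le_of_forall_setLIntegral_le_of_sigmaFinite (by fun_prop) fun A _ _ => ?_
    rw [lintegral_add_left (by fun_prop), Measure.setLIntegral_rnDeriv hac, setLIntegral_const,
      setLIntegral_const, one_mul]
    exact hνμ A
  filter_upwards [upper, lower, μ.rnDeriv_ne_top ν] with x hx_upper hx_lower hx_fin
  lift μ.rnDeriv ν x to ℝ≥0 using hx_fin with r
  norm_cast at hx_upper hx_lower
  rw [ENNReal.coe_toReal, abs_le]
  constructor
  · have : (1 : ℝ) ≤ r + ε := mod_cast hx_lower
    linarith
  · have : (r : ℝ) ≤ 1 + ε := mod_cast hx_upper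
    linarith

lemma klDiv_le_sq_mul_of_le {ε : ℝ≥0} (hμν : μ ≤ ν + ε • ν) (hνμ : ν ≤ μ + ε • ν) :
    klDiv μ ν ≤ (ε : ℝ≥0∞) ^ 2 * ν Set.univ := by
  have hac : μ ≪ ν := fun A hA => by simpa [hA] using hμν A
  rw [klDiv_eq_lintegral_klFun_of_ac hac, ← lintegral_const]
  refine lintegral_mono_ae ?_
  filter_upwards [abs_rnDeriv_sub_one_le hμν hνμ] with x hx
  calc ENNReal.ofReal (klFun (μ.rnDeriv ν x).toReal)
      ≤ ENNReal.ofReal (((μ.rnDeriv ν x).toReal - 1) ^ 2) :=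
        ENNReal.ofReal_le_ofReal (klFun_le_sq ENNReal.toReal_nonneg)
    _ ≤ ENNReal.ofReal ((ε : ℝ) ^ 2) :=
        ENNReal.ofReal_le_ofReal (sq_le_sq' (neg_le_of_abs_le hx) (le_of_abs_le hx))
    _ = (ε : ℝ≥0∞) ^ 2 := by simp [ENNReal.ofReal_pow]

end

lemma compProd_le_add_smul (μ : Measure H) [SFinite μ]
    {κ η ξ : Kernel H W} [IsSFiniteKernel κ] [IsSFiniteKernel η] [IsSFiniteKernel ξ]
    {ε : ℝ≥0} (h : ∀ a, κ a ≤ η a + ε • ξ a) : μ ⊗ₘ κ ≤ μ ⊗ₘ η + ε • (μ ⊗ₘ ξ) := by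
  refine Measure.le_iff.2 fun A hA => ?_
  simp only [Measure.add_apply, Measure.smul_apply, ENNReal.smul_def, smul_eq_mul,
    Measure.compProd_apply hA]
  rw [← lintegral_const_mul _ (Kernel.measurable_kernel_prodMk_left hA),
    ← lintegral_add_left (Kernel.measurable_kernel_prodMk_left hA)]
  exact lintegral_mono fun a => h a (Prod.mk a ⁻¹' A)

lemma klDiv_compProd_le {μ ν : Measure H} [IsProbabilityMeasure μ] [IsFiniteMeasure ν]
    {κ η : Kernel H W} [IsMarkovKernel κ] [IsMarkovKernel η] {ε : ℝ≥0}
    (hκη : ∀ a, κ a ≤ η a + ε • η a) (hηκ : ∀ a, η a ≤ κ a + ε • η a) :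
    klDiv (μ ⊗ₘ κ) (ν ⊗ₘ η) ≤ klDiv μ ν + (ε : ℝ≥0∞) ^ 2 := by
  rw [klDiv_compProd_eq_add]
  gcongr
  simpa using klDiv_le_sq_mul_of_le (compProd_le_add_smul μ hκη) (compProd_le_add_smul μ hηκ)

end Comparison

section Bind

variable {V W : Type*} [MeasurableSpace V] [MeasurableSpace W]

lemma bind_mono_right (μ : Measure V) {f g : V → Measure W}
    (hf : Measurable f) (hg : Measurable g) (h : ∀ v, f v ≤ g v) : μ.bind f ≤ μ.bind g := by
  refine Measure.le_iff.2 fun A hA => ?_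
  rw [Measure.bind_apply hA hf.aemeasurable, Measure.bind_apply hA hg.aemeasurable]
  exact lintegral_mono fun v => h v A

lemma bind_mono_left {μ ν : Measure V} {f : V → Measure W}
    (hf : Measurable f) (h : μ ≤ ν) : μ.bind f ≤ ν.bind f := by
  refine Measure.le_iff.2 fun A hA => ?_
  rw [Measure.bind_apply hA hf.aemeasurable, Measure.bind_apply hA hf.aemeasurable]
  exact lintegral_mono' h le_rfl

lemma bind_finset_sum {σ : Type*} (μ : Measure V)
    {s : Finset σ} {f : σ → V → Measure W} (hf : ∀ i ∈ s, Measurable (f i)) :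
    μ.bind (fun v => ∑ i ∈ s, f i v) = ∑ i ∈ s, μ.bind (f i) := by
  ext A hA
  have hsum : Measurable fun v => ∑ i ∈ s, f i v := by
    refine Measure.measurable_of_measurable_coe _ fun A hA => ?_
    simp only [Measure.finsetSum_apply]
    exact Finset.measurable_fun_sum _ fun i hi => Measure.measurable_measure.1 (hf i hi) A hA
  simp only [Measure.bind_apply hA hsum.aemeasurable, Measure.finsetSum_apply]
  rw [lintegral_finsetSum' _ fun i hi => (Measure.measurable_measure.1 (hf i hi) A hA).aemeasurable]
  exact Finset.sum_congr rfl fun i hi => (Measure.bind_apply hA (hf i hi).aemeasurable).symm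

lemma bind_congr_of_dependsOn {ι : Type*} {X : ι → Type*} [∀ j, MeasurableSpace (X j)]
    {P P' : Measure (∀ j, X j)} {S : Set ι}
    (hP : P.map S.domRestrict = P'.map S.domRestrict)
    {f : (∀ j, X j) → Measure W} (hf : Measurable f) (hfS : DependsOn f S) :
    P.bind f = P'.bind f := by
  classical
  rcases isEmpty_or_nonempty (∀ j, X j) with _ | ⟨⟨x₀⟩⟩
  · rw [P.eq_zero_of_isEmpty, P'.eq_zero_of_isEmpty]
  let extend : (∀ j : S, X j) → ∀ j, X j := fun y j => if hj : j ∈ S then y ⟨j, hj⟩ else x₀ j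
  have hextend : Measurable extend := by
    refine measurable_pi_lambda _ fun j => ?_
    by_cases hj : j ∈ S <;> simp only [extend, hj, dite_true, dite_false] <;> fun_prop
  have hrestrict : Measurable (S.domRestrict : (∀ j, X j) → ∀ j : S, X j) :=
    measurable_pi_lambda _ fun j => measurable_pi_apply _
  have bind_eq (μ : Measure (∀ j, X j)) : μ.bind f = (μ.map S.domRestrict).bind (f ∘ extend) := by
    rw [Measure.bind, Measure.bind, Measure.map_map (hf.comp hextend) hrestrict]
    congr 2
    funext x
    exact hfS fun j hj => by simp [extend, hj]
  rw [bind_eq, bind_eq, hP]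

end Bind

section Divergences

variable {W : Type*} [MeasurableSpace W]

lemma le_add_totalVariation (P Pt : Measure W) [IsFiniteMeasure P] [IsFiniteMeasure Pt] :
    P ≤ Pt + (P.toSignedMeasure - Pt.toSignedMeasure).totalVariation := by
  refine Measure.le_iff.2 fun A hA => ?_
  have h := (le_abs_self _).trans
    ((P.toSignedMeasure - Pt.toSignedMeasure).norm_le_totalVariation A)
  rw [Measure.toSignedMeasure_sub_apply hA, sub_le_iff_le_add'] at h
  rwa [← ENNReal.toReal_le_toReal (by finiteness) (by finiteness),
    Measure.add_apply, ENNReal.toReal_add (by finiteness) (by finiteness)]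

lemma ofNNReal_toNNReal_dTV (P Pt : Measure W) [IsFiniteMeasure P] [IsFiniteMeasure Pt] :
    ((dTV P Pt).toNNReal : ℝ≥0∞) =
      (P.toSignedMeasure - Pt.toSignedMeasure).totalVariation Set.univ :=
  ENNReal.ofReal_toReal (by finiteness)

lemma dTV_nonneg (P Pt : Measure W) [IsFiniteMeasure P] [IsFiniteMeasure Pt] : 0 ≤ dTV P Pt :=
  ENNReal.toReal_nonneg

lemma dTV_comm (P Pt : Measure W) [IsFiniteMeasure P] [IsFiniteMeasure Pt] :
    dTV P Pt = dTV Pt P := by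
  rw [dTV, dTV, ← neg_sub, SignedMeasure.totalVariation_neg]

lemma dKL_le_of_klDiv_le {M Mt : Measure W} [IsProbabilityMeasure M] [IsProbabilityMeasure Mt]
    {C : ℝ≥0} (h : klDiv Mt M ≤ C) : dKL M Mt ≤ C := by
  have hac : Mt ≪ M := (klDiv_ne_top_iff.1 (ne_top_of_le_ne_top ENNReal.coe_ne_top h)).1
  calc dKL M Mt = (klDiv Mt M).toReal := (toReal_klDiv_of_measure_eq hac (by simp)).symm
    _ ≤ C := ENNReal.toReal_mono ENNReal.coe_ne_top h

end Divergences

section ProductChannel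

variable {ι : Type*} [Fintype ι] {X Z : ι → Type*} [∀ j, MeasurableSpace (Z j)]

lemma dependsOn_pi_piecewise [DecidableEq ι] (S : Finset ι)
    (r : ∀ j, X j → Measure (Z j)) (m : ∀ j, Measure (Z j)) :
    DependsOn (fun x : ∀ j, X j => Measure.pi (S.piecewise (fun j => r j (x j)) m)) S := by
  intro x y hxy
  have hr : S.piecewise (fun j => r j (x j)) m = S.piecewise (fun j => r j (y j)) m :=
    S.piecewise_congr (fun j hj => by rw [hxy j hj]) fun _ _ => rfl
  simp only [hr]

variable [∀ j, MeasurableSpace (X j)]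

lemma measurable_pi_piecewise [DecidableEq ι] (S : Finset ι)
    {r : ∀ j, X j → Measure (Z j)} [∀ j x, IsFiniteMeasure (r j x)] (hr : ∀ j, Measurable (r j))
    (m : ∀ j, Measure (Z j)) [∀ j, IsFiniteMeasure (m j)] :
    Measurable fun x : ∀ j, X j => Measure.pi (S.piecewise (fun j => r j (x j)) m) := by
  have (j : ι) (x : ∀ j, X j) : IsFiniteMeasure (S.piecewise (fun j => r j (x j)) m j) := by
    by_cases hj : j ∈ S <;> simp only [hj, Finset.piecewise, if_true, if_false] <;> infer_instance
  refine measurable_pi_measure fun j => ?_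
  by_cases hj : j ∈ S <;> simp only [hj, Finset.piecewise, if_true, if_false]
  · exact (hr j).comp (measurable_pi_apply j)
  · exact measurable_const

lemma bind_pi_add_eq_sum [DecidableEq ι] (P : Measure (∀ j, X j))
    {r : ∀ j, X j → Measure (Z j)} [∀ j x, IsFiniteMeasure (r j x)] (hr : ∀ j, Measurable (r j))
    (m : ∀ j, Measure (Z j)) [∀ j, IsFiniteMeasure (m j)] :
    P.bind (fun x => Measure.pi fun j => r j (x j) + m j) =
      ∑ S : Finset ι, P.bind fun x => Measure.pi (S.piecewise (fun j => r j (x j)) m) := by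
  rw [← bind_finset_sum P fun S _ => measurable_pi_piecewise S hr m]
  simp only [pi_add_eq_sum_piecewise]

lemma bind_pi_le_smul (V : Measure (∀ j, X j)) {r : ∀ j, X j → Measure (Z j)}
    [∀ j x, IsFiniteMeasure (r j x)] (hr : ∀ j, Measurable (r j)) {c : ι → ℝ≥0}
    {m : ∀ j, Measure (Z j)} [∀ j, IsFiniteMeasure (m j)]
    (hrm : ∀ j x, r j x ≤ c j • m j) :
    V.bind (fun x => Measure.pi fun j => r j (x j)) ≤ V Set.univ • (∏ j, c j) • Measure.pi m := by
  rw [← pi_smul_eq_prod_smul, ← Measure.bind_const]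
  exact bind_mono_right V (measurable_pi_measure fun j => (hr j).comp (measurable_pi_apply j))
    measurable_const fun x => pi_measure_mono fun j => hrm j (x j)

lemma pi_le_bind_pi (P : Measure (∀ j, X j)) [IsProbabilityMeasure P]
    {k : ∀ j, X j → Measure (Z j)} [∀ j x, IsFiniteMeasure (k j x)] (hk : ∀ j, Measurable (k j))
    {m : ∀ j, Measure (Z j)} [∀ j, IsFiniteMeasure (m j)] (hmk : ∀ j x, m j ≤ k j x) :
    Measure.pi m ≤ P.bind fun x => Measure.pi fun j => k j (x j) :=
  calc Measure.pi m = P.bind fun _ => Measure.pi m := by simp [Measure.bind_const]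
    _ ≤ P.bind fun x => Measure.pi fun j => k j (x j) :=
        bind_mono_right P measurable_const
          (measurable_pi_measure fun j => (hk j).comp (measurable_pi_apply j))
          fun x => pi_measure_mono fun j => hmk j (x j)

lemma bind_pi_add_le {P P' V : Measure (∀ j, X j)} (hPV : P ≤ P' + V)
    (hmarg : ∀ S : Set ι, S ≠ Set.univ → P.map S.domRestrict = P'.map S.domRestrict)
    {r : ∀ j, X j → Measure (Z j)} [∀ j x, IsFiniteMeasure (r j x)] (hr : ∀ j, Measurable (r j))
    (m : ∀ j, Measure (Z j)) [∀ j, IsFiniteMeasure (m j)] :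
    P.bind (fun x => Measure.pi fun j => r j (x j) + m j) ≤
      P'.bind (fun x => Measure.pi fun j => r j (x j) + m j) +
        V.bind fun x => Measure.pi fun j => r j (x j) := by
  classical
  set part : Measure (∀ j, X j) → Finset ι → Measure (∀ j, Z j) := fun μ S =>
    μ.bind fun x => Measure.pi (S.piecewise (fun j => r j (x j)) m)
  have part_strict (S : Finset ι) (hS : S ∈ ({Finset.univ} : Finset (Finset ι))ᶜ) :
      part P S = part P' S :=
    bind_congr_of_dependsOn (hmarg S (by simpa using hS)) (measurable_pi_piecewise S hr m)
      (dependsOn_pi_piecewise S r m)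
  have hres : Measurable fun x : ∀ j, X j => Measure.pi fun j => r j (x j) :=
    measurable_pi_measure fun j => (hr j).comp (measurable_pi_apply j)
  have part_univ : part P Finset.univ ≤
      part P' Finset.univ + V.bind fun x => Measure.pi fun j => r j (x j) := by
    simp only [part, Finset.piecewise_univ]
    refine (bind_mono_left hres hPV).trans_eq ?_
    let κ : Kernel (∀ j, X j) (∀ j, Z j) := ⟨_, hres⟩
    exact Measure.comp_add (κ := κ)
  rw [bind_pi_add_eq_sum P hr, bind_pi_add_eq_sum P' hr]
  calc ∑ S, part P S = part P Finset.univ + ∑ S ∈ {Finset.univ}ᶜ, part P S :=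
        Fintype.sum_eq_add_sum_compl _ _
    _ = part P Finset.univ + ∑ S ∈ {Finset.univ}ᶜ, part P' S := by
        rw [Finset.sum_congr rfl part_strict]
    _ ≤ part P' Finset.univ + V.bind (fun x => Measure.pi fun j => r j (x j)) +
          ∑ S ∈ {Finset.univ}ᶜ, part P' S := by gcongr
    _ = ∑ S, part P' S + V.bind fun x => Measure.pi fun j => r j (x j) := by
        rw [Fintype.sum_eq_add_sum_compl Finset.univ (part P'), add_right_comm]

lemma bind_pi_le_add_smul {P P' V : Measure (∀ j, X j)} (hPV : P ≤ P' + V)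
    (hmarg : ∀ S : Set ι, S ≠ Set.univ → P.map S.domRestrict = P'.map S.domRestrict)
    (R : Measure (∀ j, X j)) [IsProbabilityMeasure R]
    {k : ∀ j, X j → Measure (Z j)} [∀ j x, IsFiniteMeasure (k j x)] (hk : ∀ j, Measurable (k j))
    {c : ι → ℝ≥0} (hLDP : ∀ j x x', k j x ≤ (1 + c j) • k j x') :
    P.bind (fun x => Measure.pi fun j => k j (x j)) ≤
      P'.bind (fun x => Measure.pi fun j => k j (x j)) +
        V Set.univ • (∏ j, c j) • R.bind fun x => Measure.pi fun j => k j (x j) := by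
  obtain ⟨x₀⟩ := R.nonempty_of_neZero
  choose m hmk hkm using fun j => exists_le_of_forall_le_smul (k := k j) (by positivity) (hLDP j)
  have (j : ι) : IsFiniteMeasure (m j) := isFiniteMeasure_of_le (k j (x₀ j)) (hmk j _)
  let r (j : ι) (x : X j) : Measure (Z j) := k j x - m j
  have hr (j : ι) : Measurable (r j) := measurable_measure_sub_const (hk j) (hmk j)
  have hrm (j : ι) (x : X j) : r j x ≤ c j • m j := by
    refine Measure.sub_le_of_le_add ?_
    rw [add_comm]
    simpa only [add_smul, one_smul] using hkm j x
  have k_eq (j : ι) (x : X j) : k j x = r j x + m j := (Measure.sub_add_cancel_of_le (hmk j x)).symm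
  have residual_le : V.bind (fun x => Measure.pi fun j => r j (x j)) ≤
      V Set.univ • (∏ j, c j) • R.bind fun x => Measure.pi fun j => k j (x j) := by
    refine (bind_pi_le_smul V hr hrm).trans ?_
    gcongr
    exact pi_le_bind_pi R hk hmk
  calc P.bind (fun x => Measure.pi fun j => k j (x j))
      ≤ P'.bind (fun x => Measure.pi fun j => k j (x j)) +
          V.bind fun x => Measure.pi fun j => r j (x j) := by
        simpa only [k_eq] using bind_pi_add_le hPV hmarg hr m
    _ ≤ _ := by gcongr

end ProductChannel

section ReleaseKernel

variable {ι : Type*} [Fintype ι] {X Z : ι → Type*} [∀ j, MeasurableSpace (X j)]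
  [∀ j, MeasurableSpace (Z j)] {H : Type*} [MeasurableSpace H]

lemma measurable_pi_kernel (k : ∀ j, Kernel (X j × H) (Z j)) [∀ j, IsFiniteKernel (k j)] :
    Measurable fun p : (∀ j, X j) × H => Measure.pi fun j => k j (p.1 j, p.2) :=
  measurable_pi_measure fun j => (k j).measurable.comp (by fun_prop)

lemma measurable_pi_kernel_left (k : ∀ j, Kernel (X j × H) (Z j)) [∀ j, IsFiniteKernel (k j)]
    (h : H) : Measurable fun x : ∀ j, X j => Measure.pi fun j => k j (x j, h) :=
  (measurable_pi_kernel k).comp measurable_prodMk_right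

/-- The one-round channel from a public history `h` to the next public value: a raw sample `x ~ P`
is drawn and its components are privatized independently through `k j (x j, h)`. -/
noncomputable def releaseKernel (P : Measure (∀ j, X j)) [SFinite P]
    (k : ∀ j, Kernel (X j × H) (Z j)) [∀ j, IsFiniteKernel (k j)] : Kernel H (∀ j, Z j) where
  toFun h := P.bind fun x => Measure.pi fun j => k j (x j, h)
  measurable' := by
    refine Measure.measurable_of_measurable_coe _ fun A hA => ?_
    simp only [Measure.bind_apply hA (measurable_pi_kernel_left k _).aemeasurable]
    exact (Measure.measurable_measure.1 (measurable_pi_kernel k) A hA).lintegral_prod_left'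

instance (P : Measure (∀ j, X j)) [IsProbabilityMeasure P]
    (k : ∀ j, Kernel (X j × H) (Z j)) [∀ j, IsMarkovKernel (k j)] :
    IsMarkovKernel (releaseKernel P k) where
  isProbabilityMeasure h := isProbabilityMeasure_bind
    (measurable_pi_kernel_left k h).aemeasurable (ae_of_all _ inferInstance)

lemma releaseKernel_le_add_smul {P P' : Measure (∀ j, X j)} [IsFiniteMeasure P]
    [IsFiniteMeasure P']
    (hmarg : ∀ S : Set ι, S ≠ Set.univ → P.map S.domRestrict = P'.map S.domRestrict)
    (R : Measure (∀ j, X j)) [IsProbabilityMeasure R]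
    (k : ∀ j, Kernel (X j × H) (Z j)) [∀ j, IsFiniteKernel (k j)] {c : ι → ℝ≥0} {h : H}
    (hLDP : ∀ j x x', k j (x, h) ≤ (1 + c j) • k j (x', h)) :
    releaseKernel P k h ≤
      releaseKernel P' k h + ((dTV P P').toNNReal * ∏ j, c j) • releaseKernel R k h := by
  have hk (j : ι) : Measurable fun x => k j (x, h) := (k j).measurable.comp measurable_prodMk_right
  rw [mul_smul, ENNReal.smul_def (dTV P P').toNNReal, ofNNReal_toNNReal_dTV]
  exact bind_pi_le_add_smul (le_add_totalVariation P P') hmarg R hk hLDP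

end ReleaseKernel

lemma measurable_snoc {n : ℕ} {Y : Type*} [MeasurableSpace Y] :
    Measurable fun p : (Fin n → Y) × Y => (Fin.snoc p.1 p.2 : Fin (n + 1) → Y) := by
  refine measurable_pi_lambda _ fun i => ?_
  refine Fin.lastCases ?_ (fun i => ?_) i
  · simpa only [Fin.snoc_last] using measurable_snd
  · simpa only [Fin.snoc_castSucc] using measurable_fst.eval

section JointLaw

variable {d : ℕ} {X Z : Fin d → Type*} [∀ j, MeasurableSpace (X j)] [∀ j, MeasurableSpace (Z j)]

lemma jointLaw_succ_eq_map_compProd (P : Measure (∀ j, X j)) [IsProbabilityMeasure P]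
    (k : (i : ℕ) → (j : Fin d) → Kernel (X j × (Fin i → ∀ j, Z j)) (Z j))
    [∀ i j, IsMarkovKernel (k i j)] (n : ℕ) [SFinite (jointLaw P (fun i j x h => k i j (x, h)) n)] :
    jointLaw P (fun i j x h => k i j (x, h)) (n + 1) =
      (jointLaw P (fun i j x h => k i j (x, h)) n ⊗ₘ releaseKernel P (k n)).map
        fun p => Fin.snoc p.1 p.2 := by
  rw [Measure.compProd_eq_comp_prod, Measure.map_comp _ _ measurable_snoc, jointLaw]
  congr 1
  funext h
  rw [Kernel.map_apply _ measurable_snoc, Kernel.prod_apply, Kernel.id_apply, Measure.dirac_prod,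
    Measure.map_map measurable_snoc measurable_prodMk_left]
  rfl

lemma isProbabilityMeasure_jointLaw (P : Measure (∀ j, X j)) [IsProbabilityMeasure P]
    (k : (i : ℕ) → (j : Fin d) → Kernel (X j × (Fin i → ∀ j, Z j)) (Z j))
    [∀ i j, IsMarkovKernel (k i j)] (n : ℕ) :
    IsProbabilityMeasure (jointLaw P (fun i j x h => k i j (x, h)) n) := by
  induction n with
  | zero => rw [jointLaw]; infer_instance
  | succ n ih =>
    rw [jointLaw_succ_eq_map_compProd]
    exact Measure.isProbabilityMeasure_map measurable_snoc.aemeasurable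

lemma klDiv_jointLaw_le {P Pt : Measure (∀ j, X j)} [IsProbabilityMeasure P]
    [IsProbabilityMeasure Pt]
    (k : (i : ℕ) → (j : Fin d) → Kernel (X j × (Fin i → ∀ j, Z j)) (Z j))
    [∀ i j, IsMarkovKernel (k i j)] {ε : ℝ≥0}
    (hle : ∀ i h, releaseKernel Pt (k i) h ≤
      releaseKernel P (k i) h + ε • releaseKernel P (k i) h)
    (hge : ∀ i h, releaseKernel P (k i) h ≤
      releaseKernel Pt (k i) h + ε • releaseKernel P (k i) h) (n : ℕ) :
    klDiv (jointLaw Pt (fun i j x h => k i j (x, h)) n)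
      (jointLaw P (fun i j x h => k i j (x, h)) n) ≤ n * (ε : ℝ≥0∞) ^ 2 := by
  have hP := isProbabilityMeasure_jointLaw P k
  have hPt := isProbabilityMeasure_jointLaw Pt k
  induction n with
  | zero => simp [jointLaw]
  | succ n ih =>
    rw [jointLaw_succ_eq_map_compProd, jointLaw_succ_eq_map_compProd]
    calc _ ≤ _ := klDiv_map_le _ _ measurable_snoc
      _ ≤ _ := klDiv_compProd_le (hle n) (hge n)
      _ ≤ n * (ε : ℝ≥0∞) ^ 2 + (ε : ℝ≥0∞) ^ 2 := by gcongr
      _ = (n + 1 : ℕ) * (ε : ℝ≥0∞) ^ 2 := by push_cast; ring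

end JointLaw

/-- tensorized KL bound: for `n` i.i.d. raw samples of laws `P`
and `Pt` whose strict-subset marginals coincide, privatized through a (possibly
sequentially interactive) `α`-CLDP mechanism,
`d_KL(Law(Z_1,…,Z_n), Law(Z̃_1,…,Z̃_n)) ≤ n (∏_j (e^{α_j}−1))² d_TV(P,Pt)²`. -/
theorem stmt_7 {d : ℕ} (hd : 1 ≤ d) (X Z : Fin d → Type*)
    [∀ j, MeasurableSpace (X j)] [∀ j, MeasurableSpace (Z j)]
    (α : Fin d → ℝ) (hα : ∀ j, 0 ≤ α j)
    (K : (i : ℕ) → (j : Fin d) → X j → (Fin i → ∀ j, Z j) → Measure (Z j))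
    [hMarkov : ∀ i j x h, IsProbabilityMeasure (K i j x h)]
    (hker : ∀ i j (A : Set (Z j)), MeasurableSet A →
      Measurable fun p : X j × (Fin i → ∀ j, Z j) => K i j p.1 p.2 A)
    (hLDP : ∀ i j (x x' : X j) (h : Fin i → ∀ j, Z j) (A : Set (Z j)),
      MeasurableSet A →
      K i j x h A ≤ ENNReal.ofReal (Real.exp (α j)) * K i j x' h A)
    (P Pt : Measure (∀ j, X j)) [IsProbabilityMeasure P] [IsProbabilityMeasure Pt]
    (hmarg : ∀ S : Set (Fin d), S ≠ Set.univ →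
      P.map (fun x (j : S) => x j) = Pt.map (fun x (j : S) => x j))
    (n : ℕ) :
    dKL (jointLaw P K n) (jointLaw Pt K n)
      ≤ (n : ℝ) * (∏ j, (Real.exp (α j) - 1)) ^ 2 * (dTV P Pt) ^ 2 := by
  let k (i : ℕ) (j : Fin d) : Kernel (X j × (Fin i → ∀ j, Z j)) (Z j) :=
    ⟨fun p => K i j p.1 p.2, Measure.measurable_of_measurable_coe _ (hker i j)⟩
  have (i : ℕ) (j : Fin d) : IsMarkovKernel (k i j) := ⟨fun p => hMarkov i j p.1 p.2⟩
  let c (j : Fin d) : ℝ≥0 := (exp (α j) - 1).toNNReal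
  have hc (j : Fin d) : (c j : ℝ) = exp (α j) - 1 :=
    Real.coe_toNNReal _ (sub_nonneg.2 (one_le_exp (hα j)))
  have hk (i : ℕ) (h : Fin i → ∀ j, Z j) (j : Fin d) (x x' : X j) :
      k i j (x, h) ≤ (1 + c j) • k i j (x', h) := Measure.le_iff.2 fun A hA => by
    have exp_eq : ENNReal.ofReal (exp (α j)) = (1 + c j : ℝ≥0) := by
      rw [← ENNReal.ofReal_coe_nnreal, NNReal.coe_add, hc, NNReal.coe_one, add_sub_cancel]
    exact (hLDP i j x x' h A hA).trans_eq (by rw [exp_eq]; rfl)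
  have hkl := klDiv_jointLaw_le k (ε := (dTV P Pt).toNNReal * ∏ j, c j)
    (fun i h => dTV_comm Pt P ▸
      releaseKernel_le_add_smul (fun S hS => (hmarg S hS).symm) P (k i) (hk i h))
    (fun i h => releaseKernel_le_add_smul hmarg P (k i) (hk i h)) n
  have := isProbabilityMeasure_jointLaw P k n
  have := isProbabilityMeasure_jointLaw Pt k n
  calc dKL (jointLaw P K n) (jointLaw Pt K n)
      ≤ (n * ((dTV P Pt).toNNReal * ∏ j, c j) ^ 2 : ℝ≥0) := dKL_le_of_klDiv_le (mod_cast hkl)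
    _ = n * (∏ j, (exp (α j) - 1)) ^ 2 * dTV P Pt ^ 2 := by
        push_cast [hc, Real.coe_toNNReal _ (dTV_nonneg P Pt)]
        ring
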